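/- arXiv:2110.01838 — 2 statements merged into one kernel-verified Lean document; each statement's English description precedes it below -/
import Mathlib

section
/- Let n ≥ 4 and let S be a minimal dominating set of the flower snark J_n. Let w₁ denote the number of copies J^i having weight 1 in S and w₃ the number of copies having weight 3 in S. Then w₁ ≥ w₃, and w₁ = w₃ holds if and only if w₁ = w₃ = n/2. -/
/-- Vertices of the flower snark `J_n`: a copy index `i : Fin n` together with
one of the four vertices of the copy: `0 = a`, `1 = b`, `2 = c`, `3 = d`. -/
abbrev FV (n : ℕ) := Fin n × Fin 4

/-- The flower snark `J_n`: in each copy, `a^i` is adjacent to `b^i, c^i, d^i`;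
the `b` vertices form an `n`-cycle; the `c` and `d` vertices form a `2n`-cycle
via the paths `c^i c^{i+1}`, `d^i d^{i+1}` (for `1 ≤ i ≤ n-1`) together with the
twist edges `c^n d^1` and `d^n c^1`. -/
def flowerSnark (n : ℕ) : SimpleGraph (FV n) :=
  SimpleGraph.fromRel (fun v w =>
    (v.1 = w.1 ∧ v.2 = 0 ∧ w.2 ≠ 0) ∨
    (((v.1 : ℕ) + 1) % n = (w.1 : ℕ) ∧ v.2 = 1 ∧ w.2 = 1) ∨
    ((v.1 : ℕ) + 1 = (w.1 : ℕ) ∧ v.2 = 2 ∧ w.2 = 2) ∨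
    ((v.1 : ℕ) + 1 = (w.1 : ℕ) ∧ v.2 = 3 ∧ w.2 = 3) ∨
    ((v.1 : ℕ) = n - 1 ∧ (w.1 : ℕ) = 0 ∧ v.2 = 2 ∧ w.2 = 3) ∨
    ((v.1 : ℕ) = n - 1 ∧ (w.1 : ℕ) = 0 ∧ v.2 = 3 ∧ w.2 = 2))

/-- `S` is a dominating set of `J_n`. -/
def Dominating (n : ℕ) (S : Set (FV n)) : Prop :=
  ∀ v ∉ S, ∃ w ∈ S, (flowerSnark n).Adj v w

/-- `S` is a minimal dominating set of `J_n`. -/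
def MinimalDominating (n : ℕ) (S : Set (FV n)) : Prop :=
  Dominating n S ∧ ∀ T : Set (FV n), T ⊂ S → ¬ Dominating n T

/-- `S` is an independent set of `J_n`. -/
def IndependentSet (n : ℕ) (S : Set (FV n)) : Prop :=
  ∀ v ∈ S, ∀ w ∈ S, ¬ (flowerSnark n).Adj v w

/-- `S` is a 2-dominating set of `J_n`: every vertex outside `S` has at least
two neighbours in `S`. -/
def TwoDominating (n : ℕ) (S : Set (FV n)) : Prop :=
  ∀ v ∉ S, ∃ w₁ ∈ S, ∃ w₂ ∈ S, w₁ ≠ w₂ ∧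
    (flowerSnark n).Adj v w₁ ∧ (flowerSnark n).Adj v w₂

/-- `S` is a total dominating set of `J_n`. -/
def TotalDominating (n : ℕ) (S : Set (FV n)) : Prop :=
  ∀ v : FV n, ∃ w ∈ S, (flowerSnark n).Adj v w

/-- `S` is a connected dominating set of `J_n`. -/
def ConnectedDominating (n : ℕ) (S : Set (FV n)) : Prop :=
  Dominating n S ∧ ((flowerSnark n).induce S).Connected

/-- `S` is a secure dominating set of `J_n`. -/
def SecureDominating (n : ℕ) (S : Set (FV n)) : Prop :=
  Dominating n S ∧ ∀ v ∉ S, ∃ w ∈ S,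
    (flowerSnark n).Adj v w ∧ Dominating n (insert v (S \ {w}))

/-- `v` is undefended with respect to `f`: neither `v` nor any of its
neighbours carries a guard. -/
def Undefended (n : ℕ) (f : FV n → ℕ) (v : FV n) : Prop :=
  f v = 0 ∧ ∀ w, (flowerSnark n).Adj v w → f w = 0

/-- `f` is a weak Roman dominating function on `J_n`: `f` takes values in
`{0,1,2}`, has no undefended vertex, and every vertex `v` with `f v = 0` has a
neighbour `w` with `f w ≥ 1` such that moving one guard from `w` to `v` leaves
no undefended vertex. -/
def WeakRomanDominating (n : ℕ) (f : FV n → ℕ) : Prop :=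
  (∀ v, f v ≤ 2) ∧ (∀ v, ¬ Undefended n f v) ∧
  ∀ v, f v = 0 → ∃ w, (flowerSnark n).Adj v w ∧ 1 ≤ f w ∧
    ∀ u, ¬ Undefended n
      (fun x => if x = v then 1 else if x = w then f w - 1 else f x) u

/-- The domination number of `J_n`. -/
noncomputable def dominationNumber (n : ℕ) : ℕ :=
  sInf {k | ∃ S : Set (FV n), Dominating n S ∧ S.ncard = k}

/-- The independent domination number of `J_n`. -/
noncomputable def indepDominationNumber (n : ℕ) : ℕ :=
  sInf {k | ∃ S : Set (FV n), Dominating n S ∧ IndependentSet n S ∧ S.ncard = k}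

/-- The upper domination number of `J_n`: the maximum cardinality of a minimal
dominating set. -/
noncomputable def upperDominationNumber (n : ℕ) : ℕ :=
  sSup {k | ∃ S : Set (FV n), MinimalDominating n S ∧ S.ncard = k}

/-- The 2-domination number of `J_n`. -/
noncomputable def twoDominationNumber (n : ℕ) : ℕ :=
  sInf {k | ∃ S : Set (FV n), TwoDominating n S ∧ S.ncard = k}

/-- The total domination number of `J_n`. -/
noncomputable def totalDominationNumber (n : ℕ) : ℕ :=
  sInf {k | ∃ S : Set (FV n), TotalDominating n S ∧ S.ncard = k}

/-- The connected domination number of `J_n`. -/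
noncomputable def connectedDominationNumber (n : ℕ) : ℕ :=
  sInf {k | ∃ S : Set (FV n), ConnectedDominating n S ∧ S.ncard = k}

/-- The secure domination number of `J_n`. -/
noncomputable def secureDominationNumber (n : ℕ) : ℕ :=
  sInf {k | ∃ S : Set (FV n), SecureDominating n S ∧ S.ncard = k}

/-- The weak Roman domination number of `J_n`. -/
noncomputable def weakRomanDominationNumber (n : ℕ) : ℕ :=
  sInf {k | ∃ f : FV n → ℕ, WeakRomanDominating n f ∧ ∑ v, f v = k}

/-- The weight of the copy `J^(m mod n)` in a vertex set `S`, i.e. the number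
of vertices of `S` among `a, b, c, d` of that copy. -/
noncomputable def copyWeight {n : ℕ} (S : Set (FV n)) (m : ℕ) : ℕ :=
  (S ∩ {v : FV n | (v.1 : ℕ) = m % n}).ncard

/-- The weight of the copy `J^(m mod n)` in a function `f`, i.e.
`f a + f b + f c + f d` over that copy. -/
def fCopyWeight {n : ℕ} (f : FV n → ℕ) (m : ℕ) : ℕ :=
  ∑ v ∈ Finset.univ.filter (fun v : FV n => (v.1 : ℕ) = m % n), f v

def wt4 (a b c d : Bool) : ℕ := a.toNat + b.toNat + c.toNat + d.toNat

/-- relaxed private-neighbour condition for a vertex `b` of a copy. -/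
def prv (x0 xk xl xm p0 pk ppk q0 qk qqk : Bool) : Bool :=
  !xk || (!x0 && !xl && !xm) || (!x0 && !pk && !qk) || (!pk && !p0 && !ppk) || (!qk && !q0 && !qqk)

/-- private-neighbour condition for the vertex `a` of a copy. -/
def prv0 (x0 x1 x2 x3 p1 p2 p3 q1 q2 q3 : Bool) : Bool :=
  !x0 || (!x1 && !x2 && !x3) || (!x1 && !p1 && !q1) || (!x2 && !p2 && !q2) || (!x3 && !p3 && !q3)

def bad (x y w z : ℕ) : Bool :=
  x == 4 || y == 4 || (x == 3 && y != 1) || (y == 3 && x != 1) || (x == 2 && y == 2 && w == 2 && z == 2)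

set_option synthInstance.maxSize 2000 in
set_option synthInstance.maxHeartbeats 400000 in
theorem core : ∀ x0 x1 x2 x3 : Bool, (x0 || x1 || x2 || x3) = true →
    ∀ y0 y1 y2 y3 : Bool, (y0 || y1 || y2 || y3) = true →
    bad (wt4 x0 x1 x2 x3) (wt4 y0 y1 y2 y3) 2 2 = true →
    ∀ w0 w1 w2 w3 : Bool, (w0 || w1 || w2 || w3) = true →
    ((x0 || x1 || w1 || y1) && (x0 || x2 || w2 || y2) && (x0 || x3 || w3 || y3)) = true →
    prv0 x0 x1 x2 x3 w1 w2 w3 y1 y2 y3 = true →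
    ∀ z0 z1 z2 z3 : Bool, (z0 || z1 || z2 || z3) = true →
    bad (wt4 x0 x1 x2 x3) (wt4 y0 y1 y2 y3) (wt4 w0 w1 w2 w3) (wt4 z0 z1 z2 z3) = true →
    ((y0 || y1 || x1 || z1) && (y0 || y2 || x2 || z2) && (y0 || y3 || x3 || z3)) = true →
    prv0 y0 y1 y2 y3 x1 x2 x3 z1 z2 z3 = true →
    prv x0 x1 x2 x3 w0 w1 false y0 y1 z1 = true →
    prv x0 x2 x1 x3 w0 w2 false y0 y2 z2 = true →
    prv x0 x3 x1 x2 w0 w3 false y0 y3 z3 = true →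
    prv y0 y1 y2 y3 x0 x1 w1 z0 z1 false = true →
    prv y0 y2 y1 y3 x0 x2 w2 z0 z2 false = true →
    prv y0 y3 y1 y2 x0 x3 w3 z0 z3 false = true → False := by
  decide +kernel

def sw (k : Fin 4) : Fin 4 := if k = 2 then 3 else if k = 3 then 2 else k

def up {N : ℕ} (v : FV (N+4)) : FV (N+4) :=
  (v.1 + 1, if v.1 = Fin.last _ then sw v.2 else v.2)

theorem sw_inj : Function.Injective sw := by decide

theorem up_inj {N : ℕ} : Function.Injective (up (N := N)) := by
  rintro ⟨i, k⟩ ⟨j, l⟩ h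
  simp only [up, Prod.mk.injEq, add_left_inj] at h
  obtain ⟨rfl, h⟩ := h
  split_ifs at h
  · rw [sw_inj h]
  · rw [h]

theorem adj_iff {N : ℕ} (v w : FV (N+4)) : (flowerSnark (N+4)).Adj v w ↔
    (v.1 = w.1 ∧ v.2 = 0 ∧ w.2 ≠ 0) ∨ (v.1 = w.1 ∧ w.2 = 0 ∧ v.2 ≠ 0) ∨
    (v.2 ≠ 0 ∧ w = up v) ∨ (v.2 ≠ 0 ∧ v = up w) := by
  obtain ⟨i, k⟩ := v
  obtain ⟨j, l⟩ := w
  have hi := i.2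
  have hj := j.2
  have e1 : ((i : ℕ) + 1) % (N+4) = if (i : ℕ) = N + 3 then 0 else (i : ℕ) + 1 := by
    split_ifs with h
    · rw [h]; simp
    · apply Nat.mod_eq_of_lt; omega
  have e2 : ((j : ℕ) + 1) % (N+4) = if (j : ℕ) = N + 3 then 0 else (j : ℕ) + 1 := by
    split_ifs with h
    · rw [h]; simp
    · apply Nat.mod_eq_of_lt; omega
  simp only [flowerSnark, SimpleGraph.fromRel_adj, up, e1, e2, Prod.mk.injEq, Fin.ext_iff (n := N+4), Fin.val_add_one, Fin.val_last, ne_eq]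
  by_cases h1 : (i : ℕ) = N + 3 <;> by_cases h2 : (j : ℕ) = N + 3 <;>
  fin_cases k <;> fin_cases l <;> simp [sw, h1, h2, -Fin.val_eq_zero_iff] <;> omega

def Frame {N : ℕ} (f : Fin 4 → FV (N+4)) : Prop :=
  ∃ i, f = (fun k => (i, k)) ∨ f = (fun k => (i, sw k))

theorem Frame.up {N : ℕ} {f : Fin 4 → FV (N+4)} (h : Frame f) : Frame (fun k => _root_.up (f k)) := by
  obtain ⟨i, h | h⟩ := h <;> subst h <;> refine ⟨i + 1, ?_⟩ <;> by_cases hi : i = Fin.last _ <;>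
    simp [_root_.up, hi, funext_iff, Fin.forall_fin_succ, sw]

theorem Frame.inj {N : ℕ} {f : Fin 4 → FV (N+4)} (h : Frame f) : Function.Injective f := by
  obtain ⟨i, h | h⟩ := h <;> subst h <;> intro k l hkl
  · simpa using hkl
  · simpa [sw_inj.eq_iff] using hkl

theorem Frame.fst {N : ℕ} {f : Fin 4 → FV (N+4)} (h : Frame f) (k) : (f k).1 = (f 0).1 := by
  obtain ⟨i, h | h⟩ := h <;> subst h <;> rfl

theorem Frame.adj0 {N : ℕ} {f : Fin 4 → FV (N+4)} (h : Frame f) (w) :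
    (flowerSnark (N+4)).Adj (f 0) w ↔ w = f 1 ∨ w = f 2 ∨ w = f 3 := by
  obtain ⟨j, l⟩ := w
  rw [adj_iff]
  obtain ⟨i, h | h⟩ := h <;> subst h <;> fin_cases l <;> simp [sw, eq_comm]

theorem Frame.adj {N : ℕ} {f : Fin 4 → FV (N+4)} (h : Frame f) (k) (hk : k ≠ 0) (w) :
    (flowerSnark (N+4)).Adj (f k) w ↔ w = f 0 ∨ w = _root_.up (f k) ∨ f k = _root_.up w := by
  have h0 : (f k).2 ≠ 0 := by
    obtain ⟨i, h | h⟩ := h <;> subst h <;> revert k <;> simp <;> decide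
  have h1 : (f 0).2 = 0 := by
    obtain ⟨i, h | h⟩ := h <;> subst h <;> simp <;> decide
  rw [adj_iff]
  simp only [h0, ne_eq, false_and, not_false_eq_true, true_and, and_true, and_false, false_or]
  have e : w = f 0 ↔ (f k).1 = w.1 ∧ w.2 = 0 := by
    rw [Prod.ext_iff, h1, h.fst k, eq_comm (a := (f 0).1)]
  rw [e]

theorem priv {N : ℕ} {S : Set (FV (N+4))} (hS : MinimalDominating (N+4) S) (v) (hv : v ∈ S) :
    ∃ u, (u = v ∨ (flowerSnark (N+4)).Adj v u) ∧
      (∀ w, w ≠ v → (flowerSnark (N+4)).Adj u w → w ∉ S) ∧ (u ≠ v → u ∉ S) := by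
  have h := hS.2 (S \ {v}) (by
    refine ⟨Set.sdiff_subset, fun h => ?_⟩
    exact (h hv).2 rfl)
  unfold Dominating at h
  push Not at h
  obtain ⟨u, hu, h⟩ := h
  have h2 : ∀ w, w ≠ v → (flowerSnark (N+4)).Adj u w → w ∉ S := fun w hw ha hs => h w ⟨hs, hw⟩ ha
  refine ⟨u, ?_, h2, fun hne hs => hu ⟨hs, hne⟩⟩
  by_cases huv : u = v
  · exact Or.inl huv
  · right
    have hus : u ∉ S := fun hs => hu ⟨hs, huv⟩
    obtain ⟨w, hw, ha⟩ := hS.1 u hus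
    by_cases hwv : w = v
    · subst hwv; exact ha.symm
    · exact absurd hw (h2 w hwv ha)

theorem up_fst {N : ℕ} (v : FV (N+4)) : (up v).1 = v.1 + 1 := rfl

theorem up_ne1 {N : ℕ} (v w : FV (N+4)) (h : v.1 = w.1) : up v ≠ w := by
  intro e
  have := congrArg Prod.fst e
  rw [up_fst, h] at this
  simp at this

theorem up_ne2 {N : ℕ} (v w : FV (N+4)) (h : v.1 = w.1) : up (up v) ≠ w := by
  intro e
  have := congrArg Prod.fst e
  rw [up_fst, up_fst, h, add_assoc] at this
  have h2 : (1 + 1 : Fin (N+4)) = 0 := by simpa using this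
  have := congrArg Fin.val h2
  rw [Fin.val_add_one] at this
  simp [Fin.ext_iff] at this

theorem irrk {N : ℕ} {S : Set (FV (N+4))} (hS : MinimalDominating (N+4) S)
    {f : Fin 4 → FV (N+4)} (h : Frame f) (k l m : Fin 4)
    (hk : k ≠ 0) (hl : l ≠ 0) (hm : m ≠ 0) (hkl : l ≠ k) (hkm : m ≠ k)
    (hx : up (up (f k)) ∈ S) :
    (up (up (f 0)) ∉ S ∧ up (up (f l)) ∉ S ∧ up (up (f m)) ∉ S) ∨
    (up (up (f 0)) ∉ S ∧ up (f k) ∉ S ∧ up (up (up (f k))) ∉ S) ∨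
    (up (f k) ∉ S ∧ up (f 0) ∉ S ∧ f k ∉ S) ∨
    (up (up (up (f k))) ∉ S ∧ up (up (up (f 0))) ∉ S ∧ up (up (up (up (f k)))) ∉ S) := by
  obtain ⟨u, hu, h1, h2⟩ := priv hS _ hx
  have f1 := h.up
  have f2 := f1.up
  have f3 := f2.up
  have e0 : up (up (f 0)) ≠ up (up (f k)) := fun e => hk (f2.inj e).symm
  have el : up (up (f l)) ≠ up (up (f k)) := fun e => hkl (f2.inj e)
  have em : up (up (f m)) ≠ up (up (f k)) := fun e => hkm (f2.inj e)
  have g0 : (f k).1 = (f 0).1 := h.fst k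
  have g1 : (up (f k)).1 = (up (f 0)).1 := f1.fst k
  have g2 : (up (up (f k))).1 = (up (up (f 0))).1 := f2.fst k
  rw [f2.adj k hk] at hu
  rcases hu with rfl | rfl | rfl | hu
  · right; left
    refine ⟨h1 _ e0 ((f2.adj k hk _).2 (Or.inl rfl)), h1 _ (up_ne1 _ _ rfl).symm ((f2.adj k hk _).2 (Or.inr (Or.inr rfl))),
      h1 _ (up_ne1 _ _ rfl) ((f2.adj k hk _).2 (Or.inr (Or.inl rfl)))⟩
  · left
    have t : ∀ l : Fin 4, l ≠ 0 → l = 1 ∨ l = 2 ∨ l = 3 := by decide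
    refine ⟨h2 e0, h1 _ el ((f2.adj0 _).2 ?_), h1 _ em ((f2.adj0 _).2 ?_)⟩
    · rcases t l hl with rfl | rfl | rfl <;> simp
    · rcases t m hm with rfl | rfl | rfl <;> simp
  · right; right; right
    refine ⟨h2 (up_ne1 _ _ rfl), h1 _ (up_ne1 _ _ g2.symm) ((f3.adj k hk _).2 (Or.inl rfl)),
      h1 _ (up_ne2 _ _ rfl) ((f3.adj k hk _).2 (Or.inr (Or.inl rfl)))⟩
  · right; right; left
    have hu := up_inj hu
    subst hu
    refine ⟨h2 (up_ne1 _ _ rfl).symm, h1 _ (up_ne1 _ _ g1).symm ((f1.adj k hk _).2 (Or.inl rfl)),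
      h1 _ (up_ne2 _ _ rfl).symm ((f1.adj k hk _).2 (Or.inr (Or.inr rfl)))⟩

theorem irr0 {N : ℕ} {S : Set (FV (N+4))} (hS : MinimalDominating (N+4) S)
    {f : Fin 4 → FV (N+4)} (h : Frame f) (hx : up (f 0) ∈ S) :
    (up (f 1) ∉ S ∧ up (f 2) ∉ S ∧ up (f 3) ∉ S) ∨
    (up (f 1) ∉ S ∧ f 1 ∉ S ∧ up (up (f 1)) ∉ S) ∨
    (up (f 2) ∉ S ∧ f 2 ∉ S ∧ up (up (f 2)) ∉ S) ∨
    (up (f 3) ∉ S ∧ f 3 ∉ S ∧ up (up (f 3)) ∉ S) := by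
  obtain ⟨u, hu, h1, h2⟩ := priv hS _ hx
  have f1 := h.up
  have key : ∀ k : Fin 4, k ≠ 0 → u = up (f k) →
      (up (f k) ∉ S ∧ f k ∉ S ∧ up (up (f k)) ∉ S) := by
    rintro k hk rfl
    have e0 : up (f k) ≠ up (f 0) := fun e => hk (f1.inj e)
    refine ⟨h2 e0, h1 _ (up_ne1 _ _ (h.fst k).symm).symm ((f1.adj k hk _).2 (Or.inr (Or.inr rfl))),
      h1 _ (up_ne1 _ _ (f1.fst k)) ((f1.adj k hk _).2 (Or.inr (Or.inl rfl)))⟩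
  rw [f1.adj0] at hu
  rcases hu with rfl | hu | hu | hu
  · left
    have t : ∀ k : Fin 4, k ≠ 0 → up (f k) ∉ S := by
      intro k hk
      apply h1 _ (fun e => hk (f1.inj e))
      rw [f1.adj0]
      have t : ∀ l : Fin 4, l ≠ 0 → l = 1 ∨ l = 2 ∨ l = 3 := by decide
      rcases t k hk with rfl | rfl | rfl <;> simp
    exact ⟨t 1 (by decide), t 2 (by decide), t 3 (by decide)⟩
  · exact Or.inr (Or.inl (key 1 (by decide) hu))
  · exact Or.inr (Or.inr (Or.inl (key 2 (by decide) hu)))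
  · exact Or.inr (Or.inr (Or.inr (key 3 (by decide) hu)))

theorem dom0 {N : ℕ} {S : Set (FV (N+4))} (hS : Dominating (N+4) S)
    {f : Fin 4 → FV (N+4)} (h : Frame f) : f 0 ∈ S ∨ f 1 ∈ S ∨ f 2 ∈ S ∨ f 3 ∈ S := by
  by_contra! hc
  obtain ⟨w, hw, ha⟩ := hS _ hc.1
  rw [h.adj0] at ha
  rcases ha with rfl | rfl | rfl <;> tauto

theorem domk {N : ℕ} {S : Set (FV (N+4))} (hS : Dominating (N+4) S)
    {f : Fin 4 → FV (N+4)} (h : Frame f) (k : Fin 4) (hk : k ≠ 0) :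
    up (f 0) ∈ S ∨ up (f k) ∈ S ∨ f k ∈ S ∨ up (up (f k)) ∈ S := by
  by_contra! hc
  obtain ⟨w, hw, ha⟩ := hS _ hc.2.1
  rw [h.up.adj k hk] at ha
  rcases ha with rfl | rfl | ha
  · tauto
  · tauto
  · rw [← up_inj ha] at hw; tauto

open Classical in
theorem frame_weight {N : ℕ} (S : Set (FV (N+4)))
    {f : Fin 4 → FV (N+4)} (h : Frame f) (i : Fin (N+4)) (hi : (f 0).1 = i) :
    copyWeight S (i : ℕ) = wt4 (decide (f 0 ∈ S)) (decide (f 1 ∈ S)) (decide (f 2 ∈ S)) (decide (f 3 ∈ S)) := by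
  have e : S ∩ {v : FV (N+4) | (v.1 : ℕ) = (i : ℕ) % (N+4)} =
      ((Finset.univ.filter (fun k => f k ∈ S)).image f : Finset (FV (N+4))) := by
    ext ⟨j, l⟩
    simp only [Nat.mod_eq_of_lt i.2, Set.mem_inter_iff, Set.mem_ofPred_eq, Finset.coe_image, Finset.coe_filter, Finset.mem_univ, true_and, Set.mem_image, ← Fin.ext_iff]
    constructor
    · rintro ⟨h1, rfl⟩
      obtain ⟨i', h | h⟩ := h <;> subst h <;> simp only at hi <;> subst hi
      · exact ⟨l, h1, rfl⟩
      · have : ∀ l, sw (sw l) = l := by decide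
        have := this l
        exact ⟨sw l, by simpa only [this] using h1, by simp only [this]⟩
    · rintro ⟨k, h1, h2⟩
      have h3 := h.fst k
      rw [h2, hi] at h3
      exact ⟨h2 ▸ h1, h3⟩
  rw [copyWeight, e, Set.ncard_coe_finset, Finset.card_image_of_injective _ h.inj, Finset.card_filter]
  rw [Fin.sum_univ_four]
  simp only [wt4, Bool.toNat, Bool.cond_decide]

open Classical in
theorem dom_of (a b c d : Prop) (h : a ∨ b ∨ c ∨ d) :
    (decide a || decide b || decide c || decide d) = true := by
  simpa [or_assoc] using h

open Classical in
theorem prv0_of (x0 x1 x2 x3 p1 p2 p3 q1 q2 q3 : Prop)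
    (h : x0 → (¬ x1 ∧ ¬ x2 ∧ ¬ x3) ∨ (¬ x1 ∧ ¬ p1 ∧ ¬ q1) ∨ (¬ x2 ∧ ¬ p2 ∧ ¬ q2) ∨ (¬ x3 ∧ ¬ p3 ∧ ¬ q3)) :
    prv0 (decide x0) (decide x1) (decide x2) (decide x3) (decide p1) (decide p2) (decide p3)
      (decide q1) (decide q2) (decide q3) = true := by
  by_cases hx : x0
  · rcases h hx with h | h | h | h <;> simp [prv0, h]
  · simp [prv0, hx]

open Classical in
theorem prv_of_l (x0 xk xl xm p0 pk ppk q0 qk qqk : Prop)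
    (h : xk → (¬ x0 ∧ ¬ xl ∧ ¬ xm) ∨ (¬ x0 ∧ ¬ pk ∧ ¬ qk) ∨ (¬ pk ∧ ¬ p0 ∧ ¬ ppk) ∨ (¬ qk ∧ ¬ q0 ∧ ¬ qqk)) :
    prv (decide x0) (decide xk) (decide xl) (decide xm) (decide p0) (decide pk) false
      (decide q0) (decide qk) (decide qqk) = true := by
  by_cases hx : xk
  · rcases h hx with h | h | h | h <;> simp [prv, h]
  · simp [prv, hx]

open Classical in
theorem prv_of_r (x0 xk xl xm p0 pk ppk q0 qk qqk : Prop)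
    (h : xk → (¬ x0 ∧ ¬ xl ∧ ¬ xm) ∨ (¬ x0 ∧ ¬ pk ∧ ¬ qk) ∨ (¬ pk ∧ ¬ p0 ∧ ¬ ppk) ∨ (¬ qk ∧ ¬ q0 ∧ ¬ qqk)) :
    prv (decide x0) (decide xk) (decide xl) (decide xm) (decide p0) (decide pk) (decide ppk)
      (decide q0) (decide qk) false = true := by
  by_cases hx : xk
  · rcases h hx with h | h | h | h <;> simp [prv, h]
  · simp [prv, hx]

open Classical in
theorem local_bad {N : ℕ} {S : Set (FV (N+4))} (hS : MinimalDominating (N+4) S) (i : Fin (N+4)) :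
    bad (copyWeight S ((i + 1 + 1 : Fin (N+4)) : ℕ)) (copyWeight S ((i + 1 + 1 + 1: Fin (N+4)) : ℕ))
     (copyWeight S ((i + 1 : Fin (N+4)) : ℕ)) (copyWeight S ((i + 1 + 1 + 1 + 1: Fin (N+4)) : ℕ)) = false := by
  have f0 : Frame (fun k => ((i, k) : FV (N+4))) := ⟨i, Or.inl rfl⟩
  generalize hf : (fun k => ((i, k) : FV (N+4))) = f at f0
  have hi : (f 0).1 = i := by rw [← hf]
  have f1 := f0.up
  have f2 := f1.up
  have f3 := f2.up
  have f4 := f3.up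
  rw [frame_weight S f1 (i+1) (by simp [up_fst, hi]), frame_weight S f2 (i+1+1) (by simp [up_fst, hi]),
    frame_weight S f3 (i+1+1+1) (by simp [up_fst, hi]), frame_weight S f4 (i+1+1+1+1) (by simp [up_fst, hi])]
  rw [← Bool.not_eq_true]
  intro hb
  refine core _ _ _ _ ?_ _ _ _ _ ?_ ?_ _ _ _ _ ?_ ?_ ?_ _ _ _ _ ?_ hb ?_ ?_ ?_ ?_ ?_ ?_ ?_ ?_
  · exact dom_of _ _ _ _ (dom0 hS.1 f2)
  · exact dom_of _ _ _ _ (dom0 hS.1 f3)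
  · revert hb
    unfold bad
    simp only [Bool.or_eq_true, Bool.and_eq_true, beq_self_eq_true, and_true]
    tauto
  · exact dom_of _ _ _ _ (dom0 hS.1 f1)
  · rw [Bool.and_eq_true, Bool.and_eq_true]
    exact ⟨⟨dom_of _ _ _ _ (domk hS.1 f1 1 (by decide)), dom_of _ _ _ _ (domk hS.1 f1 2 (by decide))⟩,
      dom_of _ _ _ _ (domk hS.1 f1 3 (by decide))⟩
  · exact prv0_of _ _ _ _ _ _ _ _ _ _ (irr0 hS f1)
  · exact dom_of _ _ _ _ (dom0 hS.1 f4)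
  · rw [Bool.and_eq_true, Bool.and_eq_true]
    exact ⟨⟨dom_of _ _ _ _ (domk hS.1 f2 1 (by decide)), dom_of _ _ _ _ (domk hS.1 f2 2 (by decide))⟩,
      dom_of _ _ _ _ (domk hS.1 f2 3 (by decide))⟩
  · exact prv0_of _ _ _ _ _ _ _ _ _ _ (irr0 hS f2)
  · exact prv_of_l _ _ _ _ _ _ _ _ _ _ (irrk hS f0 1 2 3 (by decide) (by decide) (by decide) (by decide) (by decide))
  · exact prv_of_l _ _ _ _ _ _ _ _ _ _ (irrk hS f0 2 1 3 (by decide) (by decide) (by decide) (by decide) (by decide))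
  · exact prv_of_l _ _ _ _ _ _ _ _ _ _ (irrk hS f0 3 1 2 (by decide) (by decide) (by decide) (by decide) (by decide))
  · exact prv_of_r _ _ _ _ _ _ _ _ _ _ (irrk hS f1 1 2 3 (by decide) (by decide) (by decide) (by decide) (by decide))
  · exact prv_of_r _ _ _ _ _ _ _ _ _ _ (irrk hS f1 2 1 3 (by decide) (by decide) (by decide) (by decide) (by decide))
  · exact prv_of_r _ _ _ _ _ _ _ _ _ _ (irrk hS f1 3 1 2 (by decide) (by decide) (by decide) (by decide) (by decide))

theorem weight_pos {N : ℕ} {S : Set (FV (N+4))} (hS : MinimalDominating (N+4) S) (i : Fin (N+4)) :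
    1 ≤ copyWeight S (i : ℕ) ∧ copyWeight S (i : ℕ) ≤ 4 := by
  classical
  have f0 : Frame (fun k => ((i, k) : FV (N+4))) := ⟨i, Or.inl rfl⟩
  rw [frame_weight S f0 i rfl]
  have := dom0 hS.1 f0
  have key : ∀ a b c d : Bool, (a || b || c || d) = true → 1 ≤ wt4 a b c d ∧ wt4 a b c d ≤ 4 := by decide
  exact key _ _ _ _ (dom_of _ _ _ _ this)

theorem flowerSnark_minimalDominating_w1_ge_w3 (n : ℕ) (hn : 4 ≤ n)
    (S : Set (FV n)) (hS : MinimalDominating n S) :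
    {i : Fin n | copyWeight S (i : ℕ) = 3}.ncard ≤
      {i : Fin n | copyWeight S (i : ℕ) = 1}.ncard ∧
    ({i : Fin n | copyWeight S (i : ℕ) = 1}.ncard =
        {i : Fin n | copyWeight S (i : ℕ) = 3}.ncard ↔
      2 * {i : Fin n | copyWeight S (i : ℕ) = 1}.ncard = n ∧
      2 * {i : Fin n | copyWeight S (i : ℕ) = 3}.ncard = n) := by
  obtain ⟨N, rfl⟩ : ∃ N, n = N + 4 := ⟨n - 4, by omega⟩
  have hl := local_bad hS
  have hp := weight_pos hS
  generalize hg : (fun i : Fin (N+4) => copyWeight S (i : ℕ)) = g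
  have hg' : ∀ i : Fin (N+4), copyWeight S (i : ℕ) = g i := fun i => by rw [← hg]
  simp only [hg'] at hl hp ⊢
  clear hg hg'
  simp only [bad, Bool.or_eq_false_iff, Bool.and_eq_false_iff, beq_eq_false_iff_ne, bne_eq_false_iff_eq] at hl
  have sub2 : ∀ i : Fin (N+4), i - 1 - 1 + 1 + 1 = i := fun i => by simp
  have h4 : ∀ i, g i ≠ 4 := fun i => by
    have := (hl (i-1-1)).1.1.1.1
    rwa [sub2] at this
  have hr : ∀ i, g i = 3 → g (i+1) = 1 := fun i h => by
    have := (hl (i-1-1)).1.1.2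
    rw [sub2] at this
    tauto
  have hlft : ∀ i, g (i+1) = 3 → g i = 1 := fun i h => by
    have := (hl (i-1-1)).1.2
    rw [sub2] at this
    tauto
  have h2 : ¬ ∀ i, g i = 2 := fun h => by
    have := (hl 0).2
    simp [h] at this
  clear hl
  set A := {i | g i = 3} with hA
  set B := {i | g i = 1} with hB
  have hinj : Function.Injective (fun i : Fin (N+4) => i + 1) := add_left_injective 1
  have hinj' : Function.Injective (fun i : Fin (N+4) => i - 1) := sub_left_injective
  have s1 : (fun i => i + 1) '' A ⊆ B := by
    rintro _ ⟨i, hi, rfl⟩; exact hr i hi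
  have s2 : (fun i => i - 1) '' A ⊆ B := by
    rintro _ ⟨i, hi, rfl⟩; exact hlft (i-1) (by rw [sub_add_cancel]; exact hi)
  have c1 := Set.ncard_image_of_injective A hinj
  have c2 := Set.ncard_image_of_injective A hinj'
  have hle : A.ncard ≤ B.ncard := c1 ▸ Set.ncard_le_ncard s1
  refine ⟨hle, fun he => ?_, fun h => by omega⟩
  have e2 := Set.eq_of_subset_of_ncard_le s2 (by omega)
  have hr' : ∀ i, g i = 1 → g (i+1) = 3 := fun i hi => by
    have : i ∈ (fun i => i - 1) '' A := by rw [e2]; exact hi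
    obtain ⟨j, hj, rfl⟩ := this
    change g (j - 1 + 1) = 3
    rw [sub_add_cancel]; exact hj
  have hex : ∃ i, g i = 1 ∨ g i = 3 := by
    by_contra! hc
    apply h2
    intro i
    have := hc i; have := h4 i; have := hp i
    omega
  obtain ⟨i0, hi0⟩ := hex
  have hall : ∀ m : ℕ, ∀ i : Fin (N+4), (i : ℕ) = ((i0 : ℕ) + m) % (N+4) → g i = 1 ∨ g i = 3 := by
    intro m
    induction m with
    | zero =>
      intro i hi
      have : i = i0 := Fin.ext (by rw [hi, add_zero, Nat.mod_eq_of_lt i0.2])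
      rwa [this]
    | succ m ih =>
      intro i hi
      have hj := ih ⟨((i0 : ℕ) + m) % (N+4), Nat.mod_lt _ (by omega)⟩ rfl
      generalize hjj : (⟨((i0 : ℕ) + m) % (N+4), Nat.mod_lt _ (by omega)⟩ : Fin (N+4)) = j at hj
      have hij : i = j + 1 := by
        apply Fin.ext
        rw [hi, ← hjj, Fin.val_add, Fin.val_one, Nat.mod_add_mod, add_assoc]
      rw [hij]
      rcases hj with ih | ih
      · exact Or.inr (hr' _ ih)
      · exact Or.inl (hr _ ih)
  have hall' : ∀ i, g i = 1 ∨ g i = 3 := fun i => by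
    refine hall ((i : ℕ) + (N + 4) - i0) i ?_
    have := i0.2
    have e : (i0 : ℕ) + ((i : ℕ) + (N + 4) - i0) = (i : ℕ) + (N + 4) := by omega
    rw [e, Nat.add_mod_right, Nat.mod_eq_of_lt i.2]
  have hu : A ∪ B = Set.univ := by
    ext i; simp only [hA, hB, Set.mem_union, Set.mem_ofPred_eq, Set.mem_univ, iff_true]
    exact (hall' i).symm
  have hd : Disjoint A B := by
    rw [Set.disjoint_left]
    intro i hi hi'
    simp only [hA, hB, Set.mem_ofPred_eq] at hi hi'
    omega
  have := Set.ncard_union_eq hd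
  rw [hu, Set.ncard_univ, Nat.card_eq_fintype_card, Fintype.card_fin] at this
  omega
end

section
/- For every integer n ≥ 4, the total domination number of the flower snark J_n is at least ⌈3n/2⌉. -/
open Classical in
noncomputable def fsInd {n : ℕ} (S : Set (FV n)) (i : Fin n) (j : Fin 4) : ℕ :=
  if (i, j) ∈ S then 1 else 0

noncomputable def fsT {n : ℕ} (S : Set (FV n)) (i : Fin n) : ℕ :=
  fsInd S i 1 + fsInd S i 2 + fsInd S i 3

theorem fsInd_le {n : ℕ} (S : Set (FV n)) (i : Fin n) (j : Fin 4) : fsInd S i j ≤ 1 := by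
  unfold fsInd; split_ifs <;> omega

theorem fsInd_mem {n : ℕ} {S : Set (FV n)} {i : Fin n} {j : Fin 4} (h : (i, j) ∈ S) :
    fsInd S i j = 1 := by
  simp [fsInd, h]

theorem fsT_pos {n : ℕ} {S : Set (FV n)} (hn : 4 ≤ n) (h : TotalDominating n S) (i : Fin n) :
    1 ≤ fsT S i := by
  obtain ⟨⟨p, q⟩, hw, ha⟩ := h (i, 0)
  simp only [flowerSnark, SimpleGraph.fromRel_adj] at ha
  have hp : p = i ∧ q ≠ 0 := by
    obtain ⟨-, ha⟩ := ha
    simp at ha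
    grind
  obtain ⟨rfl, hq⟩ := hp
  have := fsInd_mem hw
  unfold fsT
  fin_cases q <;> simp at * <;> omega

theorem fsT_nbr {n : ℕ} {S : Set (FV n)} (hn : 4 ≤ n) (h : TotalDominating n S)
    (i k l : Fin n) (hk : ((i : ℕ) + 1) % n = k) (hl : ((k : ℕ) + 1) % n = l)
    (h0 : fsInd S k 0 = 0) : 3 ≤ fsT S i + fsT S l := by
  have hk' : ((i : ℕ) + 1 = n ∧ (k : ℕ) = 0) ∨ (i : ℕ) + 1 = k := by
    rcases Nat.lt_or_ge ((i : ℕ) + 1) n with h | h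
    · right; rwa [Nat.mod_eq_of_lt h] at hk
    · left
      have : (i : ℕ) + 1 = n := by omega
      rw [this, Nat.mod_self] at hk; omega
  have hl' : ((k : ℕ) + 1 = n ∧ (l : ℕ) = 0) ∨ (k : ℕ) + 1 = l := by
    rcases Nat.lt_or_ge ((k : ℕ) + 1) n with h | h
    · right; rwa [Nat.mod_eq_of_lt h] at hl
    · left
      have : (k : ℕ) + 1 = n := by omega
      rw [this, Nat.mod_self] at hl; omega
  have hk0 : (k, (0 : Fin 4)) ∉ S := fun hh => by rw [fsInd_mem hh] at h0; omega
  have e1 : 1 ≤ fsInd S i 1 + fsInd S l 1 := by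
    obtain ⟨⟨p, q⟩, hw, ha⟩ := h (k, 1)
    have hs := fsInd_mem hw
    simp [flowerSnark, SimpleGraph.fromRel_adj] at ha
    obtain ⟨-, ⟨h1, rfl⟩ | ⟨rfl, rfl⟩ | ⟨h1, rfl⟩⟩ := ha
    · have : p = l := Fin.ext (by omega)
      subst this; omega
    · exact absurd hw hk0
    · have : p = i := by
        apply Fin.ext
        rcases Nat.lt_or_ge ((p : ℕ) + 1) n with h | h
        · rw [Nat.mod_eq_of_lt h] at h1; omega
        · have : (p : ℕ) + 1 = n := by omega
          rw [this, Nat.mod_self] at h1; omega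
      subst this; omega
  have key : ∀ j : Fin 4, (j = 2 ∨ j = 3) →
      fsInd S i (if (k : ℕ) = 0 then 5 - j else j) +
      fsInd S l (if (k : ℕ) + 1 = n then 5 - j else j) ≥ 1 := by
    intro j hj
    obtain ⟨⟨p, q⟩, hw, ha⟩ := h (k, j)
    have hs := fsInd_mem hw
    have hpi : (p : ℕ) = i → p = i := Fin.ext
    have hpl : (p : ℕ) = l → p = l := Fin.ext
    have t1 : (5 - 2 : Fin 4) = 3 := by decide
    have t2 : (5 - 3 : Fin 4) = 2 := by decide
    rcases hj with rfl | rfl <;> simp [flowerSnark, SimpleGraph.fromRel_adj] at ha <;>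
      simp only [t1, t2] <;> obtain ⟨-, ha⟩ := ha <;>
      rcases ha with (ha | ha) | (ha | ha | ha)
    all_goals first
      | (obtain ⟨rfl, rfl⟩ := ha; exact absurd hw hk0)
      | (have : p = i := hpi (by omega)
         have hq := ha.2
         split_ifs <;> first | omega | (simp_all; try omega))
      | (have : p = l := hpl (by omega)
         have hq := ha.2
         split_ifs <;> first | omega | (simp_all; try omega))
  have k2 := key 2 (Or.inl rfl)
  have k3 := key 3 (Or.inr rfl)
  have t1 : (5 - 2 : Fin 4) = 3 := by decide
  have t2 : (5 - 3 : Fin 4) = 2 := by decide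
  rw [t1] at k2
  rw [t2] at k3
  unfold fsT
  split_ifs at k2 k3 <;> omega

def fsGive (x y z : ℤ) : ℤ :=
  if y = 1 ∧ 2 ≤ x then (if z = 1 then 2 else 1) else 0

theorem fsLocal (t a : Fin 5 → ℤ) (ha : ∀ i, 0 ≤ a i)
    (ht : ∀ i, 1 ≤ t i)
    (h1 : a 1 = 0 → 3 ≤ t 0 + t 2) (h2 : a 2 = 0 → 3 ≤ t 1 + t 3)
    (h3 : a 3 = 0 → 3 ≤ t 2 + t 4) :
    0 ≤ 4 * (t 2 + a 2) - 6
      + fsGive (t 1 + a 1) (t 2 + a 2) (t 3 + a 3)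
      + fsGive (t 3 + a 3) (t 2 + a 2) (t 1 + a 1)
      - fsGive (t 2 + a 2) (t 3 + a 3) (t 4 + a 4)
      - fsGive (t 2 + a 2) (t 1 + a 1) (t 0 + a 0) := by
  have := ha 0; have := ha 1; have := ha 2; have := ha 3; have := ha 4
  have := ht 0; have := ht 1; have := ht 2; have := ht 3; have := ht 4
  unfold fsGive
  split_ifs <;> omega

theorem fsCard {n : ℕ} (S : Set (FV n)) :
    S.ncard = ∑ i : Fin n, (fsT S i + fsInd S i 0) := by
  classical
  rw [Set.ncard_eq_toFinset_card', ← Set.filter_mem_univ_eq_toFinset, Finset.card_filter,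
    Fintype.sum_prod_type]
  refine Finset.sum_congr rfl fun i _ => ?_
  simp only [Fin.sum_univ_four, fsT, fsInd]
  ring

theorem fsMain {n : ℕ} (hn : 4 ≤ n) (S : Set (FV n)) (h : TotalDominating n S) :
    3 * n ≤ 2 * S.ncard := by
  haveI : NeZero n := ⟨by omega⟩
  have hv : ∀ i : Fin n, ((i : ℕ) + 1) % n = ((i + 1 : Fin n) : ℕ) := by
    intro i
    rw [Fin.val_add, Fin.val_one', Nat.mod_eq_of_lt (show 1 < n by omega)]
  have sh : ∀ f : Fin n → ℤ, ∑ i, f (i + 1) = ∑ i, f i := fun f =>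
    Equiv.sum_comp (Equiv.addRight (1 : Fin n)) f
  set w : Fin n → ℤ := fun i => (fsT S i : ℤ) + fsInd S i 0 with hw
  have loc : ∀ i : Fin n, 0 ≤ 4 * w (i+1+1) - 6 + fsGive (w (i+1)) (w (i+1+1)) (w (i+1+1+1))
      + fsGive (w (i+1+1+1)) (w (i+1+1)) (w (i+1))
      - fsGive (w (i+1+1)) (w (i+1+1+1)) (w (i+1+1+1+1))
      - fsGive (w (i+1+1)) (w (i+1)) (w i) := by
    intro i
    have nb : ∀ i : Fin n, (fsInd S (i+1) 0 : ℤ) = 0 → (3:ℤ) ≤ fsT S i + fsT S (i+1+1) := by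
      intro i h0
      exact_mod_cast fsT_nbr hn h i (i+1) (i+1+1) (hv _) (hv _) (by exact_mod_cast h0)
    let u : Fin 5 → Fin n := ![i, i+1, i+1+1, i+1+1+1, i+1+1+1+1]
    exact fsLocal (fun m => fsT S (u m)) (fun m => fsInd S (u m) 0) (fun m => by positivity)
      (fun m => by exact_mod_cast fsT_pos hn h (u m)) (nb i) (nb (i+1)) (nb (i+1+1))
  have tot := Finset.sum_nonneg (s := Finset.univ) fun i _ => loc i
  simp only [Finset.sum_add_distrib, Finset.sum_sub_distrib, ← Finset.mul_sum] at tot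
  have s1 := sh fun i => w (i+1)
  have s2 := sh w
  have s3 := sh fun i => fsGive (w i) (w (i+1)) (w (i+1+1))
  have s4 := sh fun i => fsGive (w (i+1)) (w (i+1+1)) (w (i+1+1+1))
  have s5 := sh fun i => fsGive (w (i+1+1)) (w (i+1)) (w i)
  simp only [Finset.sum_const, Finset.card_univ, Fintype.card_fin, nsmul_eq_mul] at tot
  have hc : (S.ncard : ℤ) = ∑ i, w i := by rw [fsCard S]; push_cast; rfl
  zify
  linarith

/-- For every `n ≥ 4`, the total domination number of the flower snark `J_n`
is at least `⌈3n/2⌉`. -/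
theorem flowerSnark_totalDomination_lower_bound (n : ℕ) (hn : 4 ≤ n) :
    ⌈(3 * (n : ℚ)) / 2⌉ ≤ (totalDominationNumber n : ℤ) := by
  have hne : {k | ∃ S : Set (FV n), TotalDominating n S ∧ S.ncard = k}.Nonempty := by
    refine ⟨_, Set.univ, ?_, rfl⟩
    rintro ⟨i, j⟩
    by_cases hj : j = 0
    · exact ⟨(i, 1), trivial, by simp [flowerSnark, SimpleGraph.fromRel_adj, hj]⟩
    · exact ⟨(i, 0), trivial, by simp [flowerSnark, SimpleGraph.fromRel_adj, hj]⟩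
  obtain ⟨S, hS, hc⟩ := Nat.sInf_mem hne
  have := fsMain hn S hS
  have e : S.ncard = totalDominationNumber n := hc
  rw [e] at this
  rw [Int.ceil_le]
  have h2 : (3 * n : ℚ) ≤ 2 * totalDominationNumber n := by exact_mod_cast this
  push_cast
  linarith
end
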